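/- arXiv:1802.06533 — 3 statements merged into one kernel-verified Lean document; each statement's English description precedes it below -/
import Mathlib

section
/- Let A be a commutative ring which is a ℚ-algebra, S a set of derivations of A, and I a prime ideal of A. Then the largest S-stable ideal of A contained in I is a prime ideal. -/
theorem core_aux_leibniz {A : Type*} [CommRing A] (d : A → A)
    (hadd : ∀ a b : A, d (a + b) = d a + d b)
    (hmul : ∀ a b : A, d (a * b) = a * d b + b * d a) (a b : A) (n : ℕ) :
    d^[n] (a * b) = ∑ ij ∈ Finset.HasAntidiagonal.antidiagonal n,
      ((n.choose ij.1 : ℕ) : A) * (d^[ij.1] a * d^[ij.2] b) := by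
  induction n with
  | zero => simp
  | succ n ih =>
    rw [Function.iterate_succ_apply', ih,
      Finset.sum_antidiagonal_choose_succ_mul (fun i j => d^[i] a * d^[j] b) n,
      ← Finset.sum_add_distrib]
    let D : A →+ A := AddMonoidHom.mk' d hadd
    have hD : ∀ x, d x = D x := fun _ => rfl
    rw [hD, map_sum]
    refine Finset.sum_congr rfl fun ij hij => ?_
    have h1 : n.choose ij.2 = n.choose ij.1 := by
      rw [Finset.HasAntidiagonal.mem_antidiagonal] at hij
      exact (Nat.choose_symm_of_eq_add hij.symm).symm
    rw [← nsmul_eq_mul, map_nsmul, ← hD, hmul, nsmul_eq_mul, h1]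
    simp only [Function.iterate_succ_apply']
    ring

theorem core_aux_single {A : Type*} [CommRing A] [Algebra ℚ A] (d : A → A)
    (hadd : ∀ a b : A, d (a + b) = d a + d b)
    (hmul : ∀ a b : A, d (a * b) = a * d b + b * d a)
    (Q : Ideal A) (hQ : Q.IsPrime) :
    ∃ R : Ideal A, R.IsPrime ∧ ∀ x, x ∈ R ↔ ∀ n, d^[n] x ∈ Q := by
  let D : A →+ A := AddMonoidHom.mk' d hadd
  have hD : d = D := rfl
  let R : Ideal A :=
    { carrier := {x | ∀ n, d^[n] x ∈ Q}
      zero_mem' := fun n => by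
        rw [hD, iterate_map_zero]; exact Q.zero_mem
      add_mem' := fun {x y} hx hy n => by
        have h1 := hx n
        have h2 := hy n
        rw [hD] at h1 h2 ⊢
        rw [iterate_map_add]; exact Q.add_mem h1 h2
      smul_mem' := fun c x hx n => by
        rw [smul_eq_mul, core_aux_leibniz d hadd hmul]
        exact Q.sum_mem fun ij _ => Q.mul_mem_left _ (Q.mul_mem_left _ (hx _)) }
  have hR : ∀ x, x ∈ R ↔ ∀ n, d^[n] x ∈ Q := fun x => Iff.rfl
  refine ⟨R, ⟨?_, ?_⟩, hR⟩
  · intro h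
    apply hQ.ne_top
    rw [Ideal.eq_top_iff_one] at h ⊢
    exact (hR 1).1 h 0
  · intro a b hab
    by_contra! hcon
    obtain ⟨ha, hb⟩ := hcon
    classical
    rw [hR] at ha hb
    push Not at ha hb
    have hm := Nat.find_spec ha
    have hm' := fun k (hk : k < Nat.find ha) => not_not.1 (Nat.find_min ha hk)
    have hn := Nat.find_spec hb
    have hn' := fun k (hk : k < Nat.find hb) => not_not.1 (Nat.find_min hb hk)
    generalize Nat.find ha = m at *
    generalize Nat.find hb = n at *
    have h := (hR _).1 hab (m + n)
    rw [core_aux_leibniz d hadd hmul, ← Finset.add_sum_erase _ _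
      (show (m, n) ∈ Finset.HasAntidiagonal.antidiagonal (m + n) by simp)] at h
    have h2 := (Q.add_mem_iff_left (Q.sum_mem fun ij hij => by
      rw [Finset.mem_erase, Finset.HasAntidiagonal.mem_antidiagonal] at hij
      obtain ⟨hne, hs⟩ := hij
      apply Q.mul_mem_left
      rcases lt_or_ge ij.1 m with h1 | h1
      · exact Q.mul_mem_right _ (hm' _ h1)
      · apply Q.mul_mem_left
        apply hn'
        by_contra h3
        exact hne (Prod.ext (by simp; omega) (by simp; omega)))).1 h
    rcases hQ.mem_or_mem h2 with h3 | h3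
    · have hu : IsUnit (((m + n).choose m : ℕ) : A) := by
        have : IsUnit (((m + n).choose m : ℕ) : ℚ) :=
          (Nat.cast_ne_zero.2 (Nat.choose_pos (Nat.le_add_right m n)).ne').isUnit
        simpa using this.map (algebraMap ℚ A)
      exact hQ.ne_top (Q.eq_top_of_isUnit_mem h3 hu)
    · rcases hQ.mem_or_mem h3 with h4 | h4
      · exact hm h4
      · exact hn h4


/-- Lemma 6.2(2) (differential-algebra form, after Dixmier 3.3.2): if `A` is a
commutative ring which is a `ℚ`-algebra, `S` is a set of derivations of `A`, and `I`
is a prime ideal of `A`, then the largest `S`-stable ideal `P` contained in `I`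
(characterized by its universal property) is prime. -/
theorem core_isPrime_of_isPrime
    {A : Type*} [CommRing A] [Algebra ℚ A] (S : Set (A → A))
    (hS : ∀ d ∈ S, (∀ a b : A, d (a + b) = d a + d b) ∧
      (∀ a b : A, d (a * b) = a * d b + b * d a))
    (I : Ideal A) (hI : I.IsPrime)
    (P : Ideal A) (hPle : P ≤ I)
    (hPstable : ∀ d ∈ S, ∀ x ∈ P, d x ∈ P)
    (hPmax : ∀ J : Ideal A, J ≤ I → (∀ d ∈ S, ∀ x ∈ J, d x ∈ J) → J ≤ P) :
    P.IsPrime := by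

  obtain ⟨Q, hQ, hQI⟩ := Ideal.exists_minimalPrimes_le hPle
  have hQP : Q ≤ P := by
    refine hPmax Q hQI fun d hd x hx => ?_
    obtain ⟨R, hRp, hR⟩ := core_aux_single d (hS d hd).1 (hS d hd).2 Q hQ.1.1
    have hPR : P ≤ R := fun y hy => (hR y).2 fun n => hQ.1.2 (by
      induction n with
      | zero => exact hy
      | succ n ih =>
        rw [Function.iterate_succ_apply']
        exact hPstable d hd _ ih)
    have hRQ : R ≤ Q := fun y hy => (hR y).1 hy 0
    exact (hR x).1 (hQ.2 ⟨hRp, hPR⟩ hRQ hx) 1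
  rw [le_antisymm hQ.1.2 hQP]
  exact hQ.1.1
end

section
/- Let A be a commutative ring which is a ℚ-algebra, S a set of derivations of A, and I a radical ideal of A. Then the largest S-stable ideal of A contained in I is a radical ideal. -/
theorem aux_pow_deriv {A : Type*} [CommRing A] (d : A → A)
    (hm : ∀ a b : A, d (a * b) = a * d b + b * d a) (x : A) (n : ℕ) :
    d (x ^ (n + 1)) = ((n : A) + 1) * x ^ n * d x := by
  induction n with
  | zero => simp
  | succ k ih =>
    rw [pow_succ, hm, ih]
    push_cast
    ring

theorem aux_mul_deriv {A : Type*} [CommRing A] (d : A → A)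
    (hm : ∀ a b : A, d (a * b) = a * d b + b * d a) (u : A) (j : ℕ) :
    ∃ c, u * d (u ^ j) = u ^ j * c := by
  cases j with
  | zero => exact ⟨u * d 1, by simp⟩
  | succ k =>
    refine ⟨((k : A) + 1) * d u, ?_⟩
    rw [aux_pow_deriv d hm]
    ring

theorem aux_mem_radical {A : Type*} [CommRing A] [Algebra ℚ A] (d : A → A)
    (hm : ∀ a b : A, d (a * b) = a * d b + b * d a) (P : Ideal A)
    (hP : ∀ x ∈ P, d x ∈ P) (x : A) (n : ℕ) :
    ∀ j : ℕ, x ^ n * d x ^ j ∈ P → d x ∈ P.radical := by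
  induction n with
  | zero =>
    intro j hj
    exact ⟨j, by simpa using hj⟩
  | succ m ih =>
    intro j hj
    apply ih (j + 2)
    have h1 := P.mul_mem_left (d x) (hP _ hj)
    obtain ⟨c, hc⟩ := aux_mul_deriv d hm (d x) j
    have h2 := P.sub_mem h1 (P.mul_mem_right c hj)
    have h3 : d x * d (x ^ (m + 1) * d x ^ j) - x ^ (m + 1) * d x ^ j * c
        = ((m : A) + 1) * (x ^ m * d x ^ (j + 2)) := by
      rw [hm, aux_pow_deriv d hm x m]
      linear_combination x ^ (m + 1) * hc
    rw [h3] at h2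
    have h4 := P.mul_mem_left (algebraMap ℚ A ((m : ℚ) + 1)⁻¹) h2
    have h5 : algebraMap ℚ A ((m : ℚ) + 1)⁻¹ * ((m : A) + 1) = 1 := by
      have : ((m : A) + 1) = algebraMap ℚ A ((m : ℚ) + 1) := by simp
      rw [this, ← map_mul, inv_mul_cancel₀ (by positivity), map_one]
    rwa [← mul_assoc, h5, one_mul] at h4

/-- Lemma 6.2(3) (differential-algebra form): if `A` is a commutative ring which is a
`ℚ`-algebra, `S` is a set of derivations of `A`, and `I` is a radical ideal of `A`,
then the largest `S`-stable ideal `P` contained in `I` (characterized by its universal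
property) is radical. -/
theorem core_radical_of_radical
    {A : Type*} [CommRing A] [Algebra ℚ A] (S : Set (A → A))
    (hS : ∀ d ∈ S, (∀ a b : A, d (a + b) = d a + d b) ∧
      (∀ a b : A, d (a * b) = a * d b + b * d a))
    (I : Ideal A) (hI : I.radical = I)
    (P : Ideal A) (hPle : P ≤ I)
    (hPstable : ∀ d ∈ S, ∀ x ∈ P, d x ∈ P)
    (hPmax : ∀ J : Ideal A, J ≤ I → (∀ d ∈ S, ∀ x ∈ J, d x ∈ J) → J ≤ P) :
    P.radical = P := by
  refine le_antisymm (hPmax _ ?_ ?_) Ideal.le_radical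
  · exact (Ideal.radical_mono hPle).trans hI.le
  · rintro d hd x ⟨n, hn⟩
    exact aux_mem_radical d (hS d hd).2 P (hPstable d hd) x n 0 (by simpa using hn)
end

section
/- Let A be a commutative ring which is a ℚ-algebra, S a set of derivations of A, and I an ideal of A such that d(I) ⊆ I for all d ∈ S. Then every minimal prime ideal p of A over I (i.e., every p ∈ minimalPrimes of I) satisfies d(p) ⊆ p for all d ∈ S. -/
/-- Corollary 6.3 (differential-algebra form): if `A` is a commutative ring which is a
`ℚ`-algebra, `S` is a set of derivations of `A`, and `I` is an `S`-stable ideal of `A`,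
then every minimal prime `p` over `I` is `S`-stable. -/
theorem minimalPrimes_stable_of_stable
    {A : Type*} [CommRing A] [Algebra ℚ A] (S : Set (A → A))
    (hS : ∀ d ∈ S, (∀ a b : A, d (a + b) = d a + d b) ∧
      (∀ a b : A, d (a * b) = a * d b + b * d a))
    (I : Ideal A) (hI : ∀ d ∈ S, ∀ x ∈ I, d x ∈ I)
    (p : Ideal A) (hp : p ∈ I.minimalPrimes) :
    ∀ d ∈ S, ∀ x ∈ p, d x ∈ p := by
  intro d hd x hx
  obtain ⟨-, hmul⟩ := hS d hd
  have hprime : p.IsPrime := hp.1.1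
  have hIp : I ≤ p := hp.1.2
  by_contra hy
  have hpow : ∀ k : ℕ, d (x ^ (k + 1)) = ((k : A) + 1) * x ^ k * d x := by
    intro k
    induction k with
    | zero => simp
    | succ k ih =>
      rw [pow_succ x (k + 1), hmul, ih]
      push_cast
      ring
  have key : ∀ k : ℕ, ∀ t : A, t ∉ p → t * x ^ k ∉ I := by
    intro k
    induction k with
    | zero =>
      intro t ht h
      exact ht (hIp (by simpa using h))
    | succ k ih =>
      intro t ht h
      have h1 := hI d hd _ h
      rw [hmul, hpow] at h1
      have h2 : ((k : A) + 1) * (t * t * d x * x ^ k) ∈ I := by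
        have h3 := I.sub_mem (I.mul_mem_left t h1) (I.mul_mem_left (d t) h)
        convert h3 using 1
        ring
      have h4 : t * t * d x * x ^ k ∈ I := by
        have h5 := I.mul_mem_left (algebraMap ℚ A ((k : ℚ) + 1)⁻¹) h2
        have h6 : algebraMap ℚ A ((k : ℚ) + 1)⁻¹ * ((k : A) + 1) = 1 := by
          have h7 : ((k : A) + 1) = algebraMap ℚ A ((k : ℚ) + 1) := by simp
          rw [h7, ← map_mul, inv_mul_cancel₀ (by positivity), map_one]
        rwa [← mul_assoc, h6, one_mul] at h5
      refine ih _ ?_ h4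
      intro h8
      rcases hprime.mem_or_mem h8 with h9 | h9
      · rcases hprime.mem_or_mem h9 with h | h <;> exact ht h
      · exact hy h9
  -- the multiplicative set of all `t * x ^ k` with `t ∉ p` avoids `I`
  let M : Submonoid A := p.primeCompl ⊔ Submonoid.powers x
  have hdisj : Disjoint (I : Set A) (M : Set A) := by
    rw [Set.disjoint_left]
    intro a haI haM
    obtain ⟨t, ht, z, ⟨k, rfl⟩, rfl⟩ := Submonoid.mem_sup.1 haM
    exact key k t ht haI
  obtain ⟨q, hq, hIq, hqM⟩ := Ideal.exists_le_prime_disjoint I M hdisj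
  have hqp : q ≤ p := by
    intro a ha
    by_contra hap
    exact Set.disjoint_left.1 hqM ha ((le_sup_left : p.primeCompl ≤ M) hap)
  have hxq : x ∈ q := hp.2 ⟨hq, hIq⟩ hqp hx
  exact Set.disjoint_left.1 hqM hxq
    ((le_sup_right : Submonoid.powers x ≤ M) (Submonoid.mem_powers x))
end
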